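/- Let (X,T) be a TDS with finite topological entropy and Φ a subadditive potential with β(Φ) > -∞. Then the pressure function t ↦ P(T, tΦ) is a continuous convex real-valued function on (0,∞), and lim_{t→∞} P(t)/t = β(Φ). -/

import Mathlib

open MeasureTheory Filter Topology Set
open scoped ENNReal NNReal

/-- Positive part of an extended real, as an extended nonnegative real. -/
noncomputable def EReal.posPart (a : EReal) : ℝ≥0∞ :=
  if a = ⊤ then ⊤ else ENNReal.ofReal a.toReal

/-- `EReal`-valued logarithm of a real number: `elog r = -∞` for `r ≤ 0`. -/
noncomputable def elog (r : ℝ) : EReal := ENNReal.log (ENNReal.ofReal r)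

/-- The integral of an `EReal`-valued function, with values in `[-∞, ∞]`. -/
noncomputable def eint {X : Type*} [MeasurableSpace X] (μ : Measure X) (f : X → EReal) : EReal :=
  ((∫⁻ x, (f x).posPart ∂μ : ℝ≥0∞) : EReal) - ((∫⁻ x, (-f x).posPart ∂μ : ℝ≥0∞) : EReal)

/-- `Φ = {log φₙ}` is a subadditive potential for `T`: each `φₙ` is continuous,
nonnegative, and `φ_{n+m}(x) ≤ φₙ(x) · φₘ(Tⁿ x)`. -/
def SubadditivePotential {X : Type*} [TopologicalSpace X] (T : X → X) (φ : ℕ → X → ℝ) : Prop :=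
  (∀ n, 1 ≤ n → Continuous (φ n)) ∧ (∀ n x, 1 ≤ n → 0 ≤ φ n x) ∧
    (∀ m n : ℕ, 1 ≤ m → 1 ≤ n → ∀ x, φ (n + m) x ≤ φ n x * φ m (T^[n] x))

lemma EReal.posPart_mono' {a b : EReal} (hab : a ≤ b) : a.posPart ≤ b.posPart := by
  unfold EReal.posPart
  induction a with
  | bot => simp
  | top => simp at hab; simp [hab]
  | coe a =>
    induction b with
    | bot => simp at hab
    | top => simp
    | coe b =>
      simp
      exact ENNReal.ofReal_le_ofReal (by exact_mod_cast hab)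

lemma EReal.posPart_coe' (a : ℝ) : (a : EReal).posPart = ENNReal.ofReal a := by
  simp [EReal.posPart]

lemma elog_of_pos' {r : ℝ} (hr : 0 < r) : elog r = (Real.log r : EReal) :=
  ENNReal.log_ofReal_of_pos hr

lemma elog_of_nonpos' {r : ℝ} (hr : r ≤ 0) : elog r = ⊥ := by
  unfold elog; rw [ENNReal.log_ofReal, if_pos hr]

lemma elog_mono' {r s : ℝ} (h : r ≤ s) : elog r ≤ elog s := by
  unfold elog
  exact ENNReal.log_le_log_iff.2 (ENNReal.ofReal_le_ofReal h)

lemma eint_le_of_le' {X : Type*} [MeasurableSpace X] (μ : Measure X) [IsProbabilityMeasure μ]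
    (f : X → EReal) (c : EReal) (hc : c ≠ ⊤) (hf : ∀ x, f x ≤ c) : eint μ f ≤ c := by
  have h1 : ∫⁻ x, (f x).posPart ∂μ ≤ c.posPart := by
    calc ∫⁻ x, (f x).posPart ∂μ ≤ ∫⁻ x, c.posPart ∂μ :=
          lintegral_mono fun x => EReal.posPart_mono' (hf x)
      _ = c.posPart := by simp
  have h2 : (-c).posPart ≤ ∫⁻ x, (-f x).posPart ∂μ := by
    calc (-c).posPart = ∫⁻ x, (-c).posPart ∂μ := by simp
      _ ≤ _ := lintegral_mono fun x => EReal.posPart_mono' (EReal.neg_le_neg_iff.2 (hf x))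
  unfold eint
  refine (EReal.sub_le_sub (EReal.coe_ennreal_le_coe_ennreal_iff.2 h1)
    (EReal.coe_ennreal_le_coe_ennreal_iff.2 h2)).trans ?_
  induction c with
  | bot => simp [EReal.posPart]
  | top => simp at hc
  | coe c =>
    rw [← EReal.coe_neg, EReal.posPart_coe', EReal.posPart_coe', EReal.coe_ennreal_ofReal,
      EReal.coe_ennreal_ofReal, ← EReal.coe_sub]
    apply le_of_eq
    congr 1
    rcases le_total 0 c with h | h
    · rw [max_eq_left h, max_eq_right (by linarith)]; ring
    · rw [max_eq_right h, max_eq_left (by linarith)]; ring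

lemma le_eint_elog' {X : Type*} [TopologicalSpace X] [CompactSpace X] [MeasurableSpace X]
    [BorelSpace X] (μ : Measure X) [IsProbabilityMeasure μ]
    (f : X → ℝ) (hf : Continuous f) (b : ℝ)
    (h : ∀ k : ℕ, b ≤ ∫ x, Real.log (max (f x) (Real.exp (-(k:ℝ)))) ∂μ) :
    (b : EReal) ≤ eint μ (fun x => elog (f x)) := by
  set g : ℕ → X → ℝ := fun k x => Real.log (max (f x) (Real.exp (-(k:ℝ)))) with hg
  have hpos : ∀ k x, 0 < max (f x) (Real.exp (-(k:ℝ))) := fun k x =>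
    lt_max_of_lt_right (Real.exp_pos _)
  have hgc : ∀ k, Continuous (g k) := fun k =>
    Continuous.log (hf.max continuous_const) (fun x => (hpos k x).ne')
  have hgi : ∀ k, Integrable (g k) μ := fun k =>
    (hgc k).integrable_of_hasCompactSupport (HasCompactSupport.of_compactSpace _)
  have hplus : ∀ k x, (elog (f x)).posPart = ENNReal.ofReal (g k x) := by
    intro k x
    have he : Real.exp (-(k:ℝ)) ≤ 1 := Real.exp_le_one_iff.2 (by simp)
    rcases le_or_gt (f x) 0 with h0 | h0
    · rw [elog_of_nonpos' h0, hg]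
      simp only
      rw [max_eq_right (h0.trans (Real.exp_pos _).le), Real.log_exp, ENNReal.ofReal_of_nonpos (p := -(k:ℝ)) (by simp)]
      simp [EReal.posPart]
    · rw [elog_of_pos' h0, EReal.posPart_coe', hg]
      simp only
      rcases le_total (f x) (Real.exp (-(k:ℝ))) with h1 | h1
      · rw [max_eq_right h1, Real.log_exp, ENNReal.ofReal_of_nonpos (p := -(k:ℝ)) (by simp),
          ENNReal.ofReal_of_nonpos (Real.log_nonpos h0.le (h1.trans he))]
      · rw [max_eq_left h1]
  have hminus : ∀ x, (-elog (f x)).posPart = ⨆ k, ENNReal.ofReal (-g k x) := by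
    intro x
    apply le_antisymm
    · rcases le_or_gt (f x) 0 with h0 | h0
      · rw [elog_of_nonpos' h0]
        have : ∀ k, g k x = -(k:ℝ) := by
          intro k
          simp only [hg]
          rw [max_eq_right (h0.trans (Real.exp_pos _).le), Real.log_exp]
        simp only [this, neg_neg, ENNReal.ofReal_natCast, ENNReal.iSup_natCast]
        exact le_top
      · obtain ⟨k, hk⟩ := exists_nat_ge (-Real.log (f x))
        refine le_iSup_of_le k ?_
        rw [elog_of_pos' h0, ← EReal.coe_neg, EReal.posPart_coe']
        simp only [hg]
        rw [max_eq_left]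
        rw [← Real.le_log_iff_exp_le h0]
        linarith
    · refine iSup_le fun k => ?_
      rcases le_or_gt (f x) 0 with h0 | h0
      · rw [elog_of_nonpos' h0]
        simp [EReal.posPart]
      · rw [elog_of_pos' h0, ← EReal.coe_neg, EReal.posPart_coe']
        apply ENNReal.ofReal_le_ofReal
        simp only [hg]
        have := Real.log_le_log h0 (le_max_left (f x) (Real.exp (-(k:ℝ))))
        linarith
  have hmono : Monotone fun k x => ENNReal.ofReal (-g k x) := by
    intro k l hkl x
    apply ENNReal.ofReal_le_ofReal
    simp only [hg]
    apply neg_le_neg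
    apply Real.log_le_log (hpos l x)
    apply max_le_max le_rfl
    apply Real.exp_le_exp.2
    have : (k:ℝ) ≤ l := by exact_mod_cast hkl
    linarith
  have hA : ∀ k, ∫⁻ x, (elog (f x)).posPart ∂μ = ∫⁻ x, ENNReal.ofReal (g k x) ∂μ := fun k =>
    lintegral_congr fun x => hplus k x
  have hfin : ∀ k, ∫⁻ x, ENNReal.ofReal (g k x) ∂μ ≠ ⊤ := fun k =>
    (hgi k).lintegral_lt_top.ne
  have hfin' : ∀ k, ∫⁻ x, ENNReal.ofReal (-g k x) ∂μ ≠ ⊤ := fun k =>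
    (hgi k).neg.lintegral_lt_top.ne
  set A := ∫⁻ x, (elog (f x)).posPart ∂μ with hAdef
  have hAtop : A ≠ ⊤ := by rw [hA 0]; exact hfin 0
  have hB : ∫⁻ x, (-elog (f x)).posPart ∂μ ≤ ENNReal.ofReal (A.toReal - b) := by
    rw [lintegral_congr hminus, lintegral_iSup
      (f := fun k x => ENNReal.ofReal (-g k x))
      (fun k => ((hgc k).neg.measurable.ennreal_ofReal)) hmono]
    refine iSup_le fun k => ?_
    have := h k
    rw [integral_eq_lintegral_pos_part_sub_lintegral_neg_part (hgi k), ← hA k] at this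
    rw [← ENNReal.ofReal_toReal (hfin' k)]
    apply ENNReal.ofReal_le_ofReal
    linarith
  have hAb : 0 ≤ A.toReal - b := by
    have := h 0
    rw [integral_eq_lintegral_pos_part_sub_lintegral_neg_part (hgi 0), ← hA 0] at this
    have h3 := ENNReal.toReal_nonneg (a := ∫⁻ x, ENNReal.ofReal (-g 0 x) ∂μ)
    linarith
  unfold eint
  refine le_trans ?_ (EReal.sub_le_sub le_rfl (EReal.coe_ennreal_le_coe_ennreal_iff.2 hB))
  rw [← hAdef, ← EReal.coe_toReal (x := (A : EReal)) (by simpa using hAtop) (by simp),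
    EReal.coe_ennreal_ofReal, ← EReal.coe_sub, EReal.coe_le_coe_iff, max_eq_left hAb]
  simp

/-- empirical measures -/
lemma exists_empirical' {X : Type*} [TopologicalSpace X] [CompactSpace X] [MeasurableSpace X]
    [BorelSpace X] (T : X → X) (x : X) (n : ℕ) :
    ∃ ν : ProbabilityMeasure X, ∀ f : X → ℝ, Continuous f →
      ∫ y, f y ∂(ν : Measure X) = (∑ i ∈ Finset.range (n+1), f (T^[i] x)) / ((n + 1 : ℕ) : ℝ) := by
  let ν : Measure X := ((n + 1 : ℕ) : ℝ≥0∞)⁻¹ •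
    ∑ i ∈ Finset.range (n+1), Measure.dirac (T^[i] x)
  have hν : IsProbabilityMeasure ν := by
    constructor
    simp only [ν, Measure.smul_apply, Measure.finsetSum_apply, measure_univ, smul_eq_mul]
    simp only [Finset.sum_const, Finset.card_range, nsmul_eq_mul, mul_one]
    exact ENNReal.inv_mul_cancel (by simp) (by simp)
  refine ⟨⟨ν, hν⟩, fun f hf => ?_⟩
  have hi : ∀ i ∈ Finset.range (n+1), Integrable f (Measure.dirac (T^[i] x)) := fun i _ =>
    hf.integrable_of_hasCompactSupport (HasCompactSupport.of_compactSpace _)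
  show ∫ y, f y ∂ν = _
  simp only [ν]
  rw [integral_smul_measure, integral_finsetSum_measure hi]
  simp only [smul_eq_mul]
  rw [div_eq_inv_mul]
  congr 1
  · rw [ENNReal.toReal_inv, ENNReal.toReal_natCast]
  · refine Finset.sum_congr rfl fun i _ => ?_
    exact integral_dirac' _ _ hf.stronglyMeasurable

/-- key combinatorial inequality -/
lemma subadd_key' {X : Type*} (T : X → X) (ψ : ℕ → X → ℝ) (h0 : ∀ n x, 0 ≤ ψ n x)
    (hsub : ∀ n m x, ψ (n + m) x ≤ ψ n x * ψ m (T^[n] x)) (M : ℝ) (hM1 : 1 ≤ M)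
    (m : ℕ) (hm : 1 ≤ m) (hM : ∀ i ≤ m, ∀ x, ψ i x ≤ M) (E : X → ℝ) (hE : ∀ x, ψ m x ≤ E x) (n : ℕ) (x : X) :
    ψ (n + m) x ^ m ≤ (M * M) ^ m * ∏ i ∈ Finset.range n, E (T^[i] x) := by
  have hE0 : ∀ x, 0 ≤ E x := fun x => (h0 m x).trans (hE x)
  set F : ℕ → X → ℝ := fun n x => ∏ i ∈ Finset.range m, ψ (n + m - i) (T^[i] x) with hF
  have hF0 : ∀ n x, 0 ≤ F n x := fun n x => Finset.prod_nonneg fun i _ => h0 _ _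
  have hstep : ∀ n x, F (n+1) x ≤ E x * F n (T x) := by
    intro n x
    have e1 : F (n+1) x * ψ (n+1) (T^[m] x) = ψ (n+1+m) x * F n (T x) := by
      have a := Finset.prod_range_succ (fun i => ψ (n+1+m-i) (T^[i] x)) m
      have b := Finset.prod_range_succ' (fun i => ψ (n+1+m-i) (T^[i] x)) m
      rw [a] at b
      simp only [Nat.add_sub_cancel, Function.iterate_zero, id, Nat.sub_zero,
        Function.iterate_succ_apply] at b
      simp only [hF]
      rw [b, mul_comm]
      congr 1
      refine Finset.prod_congr rfl fun i _ => ?_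
      congr 1
      omega
    have e2 : ψ (n+1+m) x ≤ E x * ψ (n+1) (T^[m] x) := by
      rw [add_comm (n+1) m]
      exact (hsub m (n+1) x).trans (mul_le_mul_of_nonneg_right (hE x) (h0 _ _))
    rcases (h0 (n+1) (T^[m] x)).eq_or_lt with hz | hp
    · have hz' : ψ (n+1+m) x = 0 := le_antisymm (by simpa [← hz] using e2) (h0 _ _)
      have h : F (n+1) x = 0 :=
        Finset.prod_eq_zero (Finset.mem_range.2 hm) (by simpa using hz')
      rw [h]; exact mul_nonneg (hE0 _) (hF0 _ _)
    · refine le_of_mul_le_mul_right ?_ hp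
      rw [e1]
      calc _ ≤ E x * ψ (n+1) (T^[m] x) * F n (T x) := mul_le_mul_of_nonneg_right e2 (hF0 _ _)
        _ = _ := by ring
  have hFn : ∀ n x, F n x ≤ (∏ i ∈ Finset.range n, E (T^[i] x)) * M ^ m := by
    intro n
    induction n with
    | zero =>
      intro x
      simp only [Finset.range_zero, Finset.prod_empty, one_mul, hF]
      calc _ ≤ ∏ i ∈ Finset.range m, M :=
            Finset.prod_le_prod (fun i _ => h0 _ _) (fun i _ => hM _ (by omega) _)
        _ = M ^ m := by simp
    | succ n ih =>
      intro x
      rw [Finset.prod_range_succ']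
      simp only [Function.iterate_succ_apply, Function.iterate_zero, id]
      calc _ ≤ E x * F n (T x) := hstep n x
        _ ≤ E x * ((∏ i ∈ Finset.range n, E (T^[i] (T x))) * M ^ m) :=
            mul_le_mul_of_nonneg_left (ih _) (hE0 _)
        _ = _ := by ring
  calc ψ (n+m) x ^ m = ∏ i ∈ Finset.range m, ψ (n+m) x := by simp
    _ ≤ ∏ i ∈ Finset.range m, (M * ψ (n+m-i) (T^[i] x)) := by
        refine Finset.prod_le_prod (fun i _ => h0 _ _) fun i hi => ?_
        have hi' := Finset.mem_range.1 hi
        have := hsub i (n+m-i) x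
        rw [show i + (n+m-i) = n+m by omega] at this
        exact this.trans (mul_le_mul_of_nonneg_right (hM i hi'.le x) (h0 _ _))
    _ = M ^ m * F n x := by rw [Finset.prod_mul_distrib]; simp [hF]
    _ ≤ M ^ m * ((∏ i ∈ Finset.range n, E (T^[i] x)) * M ^ m) :=
        mul_le_mul_of_nonneg_left (hFn n x) (by positivity)
    _ = _ := by rw [mul_pow]; ring

lemma exists_inv_measure' {X : Type*} [MetricSpace X] [CompactSpace X] [Nonempty X]
    [MeasurableSpace X] [BorelSpace X]
    (T : X → X) (hT : Continuous T)
    (φ : ℕ → X → ℝ) (hφ : SubadditivePotential T φ) (β : ℝ)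
    (hβ : Tendsto (fun n : ℕ => elog (⨆ x, φ n x) / (n : EReal)) atTop (𝓝 (β : EReal))) :
    ∃ μ : ProbabilityMeasure X, Measure.map T (μ : Measure X) = (μ : Measure X) ∧
      ∀ m : ℕ, 1 ≤ m → ((m * β : ℝ) : EReal) ≤ eint (μ : Measure X) (fun x => elog (φ m x)) := by
  obtain ⟨hc, hnn, hsub⟩ := hφ
  set S : ℕ → ℝ := fun n => ⨆ x, φ n x with hS
  have hSpos : ∀ᶠ n in atTop, 0 < S n := by
    have h1 : ∀ᶠ n : ℕ in atTop, ((β - 1 : ℝ) : EReal) < elog (S n) / (n : EReal) :=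
      hβ.eventually (lt_mem_nhds (by exact_mod_cast (by linarith : β - 1 < β)))
    filter_upwards [h1, eventually_ge_atTop 1] with n hn hn1
    by_contra hcon
    rw [elog_of_nonpos' (not_lt.1 hcon), EReal.bot_div_of_pos_ne_top
      (by exact_mod_cast hn1) (EReal.natCast_ne_top n)] at hn
    exact absurd hn (by simp)
  have hSlim : Tendsto (fun n : ℕ => Real.log (S n) / (n : ℝ)) atTop (𝓝 β) := by
    rw [← EReal.tendsto_coe]
    refine hβ.congr' ?_
    filter_upwards [hSpos] with n hn
    show elog (S n) / (n : EReal) = _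
    rw [elog_of_pos' hn, EReal.coe_div]
    rfl
  have hmax : ∀ n : ℕ, ∃ x, φ (n+1) x = S (n+1) := by
    intro n
    obtain ⟨x, -, hx⟩ := isCompact_univ.exists_isMaxOn (univ_nonempty (α := X))
      (hc (n+1) (by omega)).continuousOn
    refine ⟨x, le_antisymm (le_ciSup (f := φ (n+1)) ⟨φ (n+1) x, ?_⟩ x) (ciSup_le fun y => hx (mem_univ y))⟩
    rintro _ ⟨y, rfl⟩
    exact hx (mem_univ y)
  choose x hx using hmax
  choose ν hν using fun n => exists_empirical' T (x n) n
  let U : Ultrafilter ℕ := Ultrafilter.of atTop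
  have hU : (U : Filter ℕ) ≤ atTop := Ultrafilter.of_le atTop
  obtain ⟨μ, -, hμ⟩ := (isCompact_univ (X := ProbabilityMeasure X)).ultrafilter_le_nhds
    (U.map ν) (by simp)
  have hμ' : Tendsto ν U (𝓝 μ) := hμ
  have hconv : ∀ f : X → ℝ, Continuous f →
      Tendsto (fun n => (∑ i ∈ Finset.range (n+1), f (T^[i] (x n))) / ((n + 1 : ℕ) : ℝ)) U
        (𝓝 (∫ y, f y ∂(μ : Measure X))) := by
    intro f hf
    have := (ProbabilityMeasure.tendsto_iff_forall_integral_tendsto.1 hμ')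
      (BoundedContinuousFunction.mkOfCompact ⟨f, hf⟩)
    simp only [BoundedContinuousFunction.mkOfCompact_apply, ContinuousMap.coe_mk] at this
    refine this.congr fun n => ?_
    exact hν n f hf
  have hinv : ∀ c : ℝ, Tendsto (fun n : ℕ => c / ((n + 1 : ℕ) : ℝ)) U (𝓝 0) := by
    intro c
    refine Tendsto.mono_left ?_ hU
    exact (tendsto_const_div_atTop_nhds_zero_nat c).comp (tendsto_add_atTop_nat 1)
  refine ⟨μ, ?_, ?_⟩
  · have hprob : IsProbabilityMeasure (Measure.map T (μ : Measure X)) :=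
      Measure.isProbabilityMeasure_map hT.measurable.aemeasurable
    refine ext_of_forall_integral_eq_of_IsFiniteMeasure fun f => ?_
    rw [integral_map hT.measurable.aemeasurable f.continuous.aestronglyMeasurable]
    have h1 := hconv (fun y => f (T y)) (f.continuous.comp hT)
    have h2 := hconv f f.continuous
    have h3 := h1.sub h2
    have h4 : Tendsto (fun n => (∑ i ∈ Finset.range (n+1), f (T (T^[i] (x n)))) / ((n + 1 : ℕ) : ℝ)
        - (∑ i ∈ Finset.range (n+1), f (T^[i] (x n))) / ((n + 1 : ℕ) : ℝ)) U (𝓝 0) := by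
      refine squeeze_zero_norm (fun n => ?_) (hinv (2 * ‖f‖))
      have e : (∑ i ∈ Finset.range (n+1), f (T (T^[i] (x n))))
          - (∑ i ∈ Finset.range (n+1), f (T^[i] (x n))) = f (T^[n+1] (x n)) - f (x n) := by
        rw [← Finset.sum_sub_distrib]
        have := Finset.sum_range_sub (fun i => f (T^[i] (x n))) (n+1)
        simpa only [Function.iterate_succ_apply', Function.iterate_zero, id] using this
      rw [← sub_div, e, norm_div, Real.norm_natCast]
      gcongr
      calc _ ≤ ‖f (T^[n+1] (x n))‖ + ‖f (x n)‖ := norm_sub_le _ _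
        _ ≤ ‖f‖ + ‖f‖ := add_le_add (f.norm_coe_le_norm _) (f.norm_coe_le_norm _)
        _ = _ := by ring
    have := tendsto_nhds_unique h3 h4
    linarith
  · intro m hm
    refine le_eint_elog' _ _ (hc m hm) _ fun k => ?_
    set E : X → ℝ := fun y => max (φ m y) (Real.exp (-(k:ℝ))) with hE
    have hEpos : ∀ y, 0 < E y := fun y => lt_max_of_lt_right (Real.exp_pos _)
    have hEc : Continuous fun y => Real.log (E y) :=
      Continuous.log ((hc m hm).max continuous_const) (fun y => (hEpos y).ne')
    set ψ : ℕ → X → ℝ := fun n y => if n = 0 then 1 else φ n y with hψ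
    have hψ0 : ∀ n y, 0 ≤ ψ n y := by
      intro n y
      simp only [hψ]
      split_ifs with h
      · exact zero_le_one
      · exact hnn n y (by omega)
    have hψs : ∀ n l y, ψ (n + l) y ≤ ψ n y * ψ l (T^[n] y) := by
      intro n l y
      simp only [hψ]
      rcases Nat.eq_zero_or_pos n with rfl | hn
      · simp
      · rcases Nat.eq_zero_or_pos l with rfl | hl
        · simp
        · rw [if_neg (by omega), if_neg (by omega), if_neg (by omega)]
          exact hsub l n hl hn y
    have hb : ∀ i, ∃ B : ℝ, 0 ≤ B ∧ ∀ y, ψ i y ≤ B := by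
      intro i
      have hci : Continuous (ψ i) := by
        rcases Nat.eq_zero_or_pos i with rfl | hi
        · simp only [hψ, if_true]; exact continuous_const
        · have : ψ i = φ i := by funext y; simp only [hψ]; rw [if_neg (by omega)]
          rw [this]; exact hc i hi
      obtain ⟨z, -, hz⟩ := isCompact_univ.exists_isMaxOn (univ_nonempty (α := X)) hci.continuousOn
      exact ⟨ψ i z, hψ0 _ _, fun y => hz (mem_univ y)⟩
    choose B hB0 hB using hb
    set M : ℝ := 1 + ∑ i ∈ Finset.range (m+1), B i with hM
    have hsum0 : 0 ≤ ∑ i ∈ Finset.range (m+1), B i := Finset.sum_nonneg fun i _ => hB0 i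
    have hM1 : 1 ≤ M := by linarith
    have hMb : ∀ i ≤ m, ∀ y, ψ i y ≤ M := by
      intro i hi y
      have := Finset.single_le_sum (fun i _ => hB0 i) (Finset.mem_range.2 (Nat.lt_succ_of_le hi))
      linarith [hB i y]
    have hψm : ∀ y, ψ m y ≤ E y := by
      intro y
      simp only [hψ]
      rw [if_neg (by omega)]
      exact le_max_left _ _
    have key := subadd_key' T ψ hψ0 hψs M hM1 m hm hMb E hψm
    set D : ℝ := m * k + Real.log ((M * M) ^ m) with hD
    have hbound : ∀ᶠ n in (U : Filter ℕ), (m : ℝ) * (Real.log (S (n+1)) / ((n+1 : ℕ) : ℝ))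
        - D / ((n+1 : ℕ) : ℝ) ≤
        (∑ i ∈ Finset.range (n+1), Real.log (E (T^[i] (x n)))) / ((n + 1 : ℕ) : ℝ) := by
      refine hU ?_
      filter_upwards [eventually_ge_atTop m, (tendsto_add_atTop_nat 1).eventually hSpos] with n hn hSn
      obtain ⟨p, hp⟩ : ∃ p, n + 1 = p + m := ⟨n + 1 - m, by omega⟩
      have h1 := key p (x n)
      rw [← hp] at h1
      have h1' : ψ (n+1) (x n) = S (n+1) := by
        rw [← hx n]; simp [hψ]
      rw [h1'] at h1
      have h2 : Real.log (S (n+1) ^ m) ≤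
          Real.log ((M * M) ^ m * ∏ i ∈ Finset.range p, E (T^[i] (x n))) :=
        Real.log_le_log (pow_pos hSn m) h1
      have hMM : (M * M) ^ m ≠ 0 := by positivity
      rw [Real.log_pow, Real.log_mul hMM (Finset.prod_pos fun i _ => hEpos _).ne',
        Real.log_prod (fun i _ => (hEpos _).ne')] at h2
      have h3 : ∑ i ∈ Finset.range (n+1), Real.log (E (T^[i] (x n))) =
          ∑ i ∈ Finset.range p, Real.log (E (T^[i] (x n))) +
          ∑ i ∈ Finset.range m, Real.log (E (T^[p + i] (x n))) := by
        rw [hp, Finset.sum_range_add]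
      have h4 : -(m * k : ℝ) ≤ ∑ i ∈ Finset.range m, Real.log (E (T^[p + i] (x n))) := by
        calc -(m * k : ℝ) = ∑ i ∈ Finset.range m, (-(k:ℝ)) := by simp
          _ ≤ _ := by
            refine Finset.sum_le_sum fun i _ => ?_
            rw [Real.le_log_iff_exp_le (hEpos _)]
            exact le_max_right _ _
      rw [← mul_div_assoc, ← sub_div]
      gcongr
      rw [h3, hD]
      linarith
    have hlim : Tendsto (fun n : ℕ => (m : ℝ) * (Real.log (S (n+1)) / ((n+1 : ℕ) : ℝ))
        - D / ((n+1 : ℕ) : ℝ)) U (𝓝 (m * β - 0)) :=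
      (((hSlim.comp (tendsto_add_atTop_nat 1)).mono_left hU).const_mul (m:ℝ)).sub (hinv D)
    rw [sub_zero] at hlim
    exact le_of_tendsto_of_tendsto hlim (hconv _ hEc) hbound

/-- Feng–Huang: for a TDS with finite topological entropy and a
subadditive potential Φ with β(Φ) > -∞, the pressure function
t ↦ P(t) = sup{h_μ(T) + t χ(μ,Φ)} is continuous, convex and real on (0,∞),
and P(t)/t → β(Φ) as t → ∞. -/
theorem pressure_function_convex_continuous_and_slope_tendsto_beta
    {X : Type*} [MetricSpace X] [CompactSpace X] [Nonempty X]
    [MeasurableSpace X] [BorelSpace X]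
    (T : X → X) (hT : Continuous T)
    (φ : ℕ → X → ℝ) (hφ : SubadditivePotential T φ)
    -- metric entropies, with finite topological entropy (variational principle)
    (h : ProbabilityMeasure X → ℝ) (hh0 : ∀ μ, 0 ≤ h μ)
    (htop : ∃ H : ℝ, ∀ μ : ProbabilityMeasure X,
      Measure.map T (μ : Measure X) = (μ : Measure X) → h μ ≤ H)
    -- Lyapunov exponents of invariant measures
    (χ : ProbabilityMeasure X → EReal)
    (hχ : ∀ μ : ProbabilityMeasure X, Measure.map T (μ : Measure X) = (μ : Measure X) →
      Tendsto (fun n : ℕ => eint (μ : Measure X) (fun x => elog (φ n x)) / (n : EReal))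
        atTop (𝓝 (χ μ)))
    -- β(Φ), finite since β(Φ) > -∞ (and always < ∞)
    (β : ℝ)
    (hβ : Tendsto (fun n : ℕ => elog (⨆ x, φ n x) / (n : EReal)) atTop (𝓝 (β : EReal)))
    -- the topological pressure, via the variational principle
    (P : ℝ → ℝ)
    (hP : ∀ t ∈ Set.Ioi (0 : ℝ), (P t : EReal) =
      sSup ((fun μ => (h μ : EReal) + (t : EReal) * χ μ) ''
        {μ : ProbabilityMeasure X | Measure.map T (μ : Measure X) = (μ : Measure X)})) :
    ContinuousOn P (Set.Ioi 0) ∧ ConvexOn ℝ (Set.Ioi 0) P ∧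
      Tendsto (fun t => P t / t) atTop (𝓝 β) := by
  have hχle : ∀ μ : ProbabilityMeasure X, Measure.map T (μ : Measure X) = (μ : Measure X) →
      χ μ ≤ (β : EReal) := by
    intro μ hμ
    refine le_of_tendsto_of_tendsto (hχ μ hμ) hβ ?_
    filter_upwards [eventually_ge_atTop 1] with n hn
    refine EReal.div_le_div_right_of_nonneg (by positivity) ?_
    refine eint_le_of_le' _ _ _ ?_ fun x => elog_mono' ?_
    · unfold elog
      rw [ENNReal.log_ofReal]
      split_ifs <;> simp
    · refine le_ciSup (f := φ n) ?_ x
      exact (isCompact_range (hφ.1 n hn)).bddAbove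
  obtain ⟨μ₀, hμ₀, hμ₀β⟩ := exists_inv_measure' T hT φ hφ β hβ
  have hχ₀ : (β : EReal) ≤ χ μ₀ := by
    refine ge_of_tendsto (hχ μ₀ hμ₀) ?_
    filter_upwards [eventually_ge_atTop 1] with n hn
    rw [EReal.le_div_iff_mul_le (by exact_mod_cast hn) (EReal.natCast_ne_top n)]
    refine le_trans (le_of_eq ?_) (hμ₀β n hn)
    rw [mul_comm, EReal.coe_mul]
    rfl
  have hconvex : ConvexOn ℝ (Set.Ioi 0) P := by
    refine ⟨convex_Ioi 0, fun s hs t ht a b ha hb hab => ?_⟩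
    have hst : a • s + b • t ∈ Set.Ioi (0:ℝ) := convex_Ioi (0:ℝ) hs ht ha hb hab
    rw [← EReal.coe_le_coe_iff, hP _ hst]
    refine sSup_le ?_
    rintro _ ⟨μ, hμ, rfl⟩
    have h1 : (h μ : EReal) + (s : EReal) * χ μ ≤ P s := by
      rw [hP s hs]; exact le_sSup ⟨μ, hμ, rfl⟩
    have h2 : (h μ : EReal) + (t : EReal) * χ μ ≤ P t := by
      rw [hP t ht]; exact le_sSup ⟨μ, hμ, rfl⟩
    have h3 := hχle μ hμ
    simp only
    induction hc : χ μ with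
    | bot =>
      rw [EReal.coe_mul_bot_of_pos hst]
      simp
    | top => rw [hc] at h3; simp at h3
    | coe c =>
      rw [hc] at h1 h2
      norm_cast at h1 h2 ⊢
      simp only [smul_eq_mul]
      have e1 := mul_le_mul_of_nonneg_left h1 ha
      have e2 := mul_le_mul_of_nonneg_left h2 hb
      have e3 : h μ = (a + b) * h μ := by rw [hab, one_mul]
      nlinarith
  refine ⟨hconvex.continuousOn isOpen_Ioi, hconvex, ?_⟩
  obtain ⟨H, hH⟩ := htop
  have hlow : ∀ t ∈ Set.Ioi (0:ℝ), t * β ≤ P t := by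
    intro t ht
    rw [← EReal.coe_le_coe_iff, hP t ht]
    refine le_trans ?_ (le_sSup ⟨μ₀, hμ₀, rfl⟩)
    have e1 : (t : EReal) * β ≤ t * χ μ₀ :=
      mul_le_mul_of_nonneg_left hχ₀ (by exact_mod_cast (le_of_lt ht))
    have e2 : (0 : EReal) ≤ h μ₀ := by exact_mod_cast hh0 μ₀
    calc ((t * β : ℝ) : EReal) = 0 + (t : EReal) * β := by rw [EReal.coe_mul, zero_add]
      _ ≤ _ := add_le_add e2 e1
  have hup : ∀ t ∈ Set.Ioi (0:ℝ), P t ≤ H + t * β := by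
    intro t ht
    rw [← EReal.coe_le_coe_iff, hP t ht]
    refine sSup_le ?_
    rintro _ ⟨μ, hμ, rfl⟩
    have e1 : (t : EReal) * χ μ ≤ t * β :=
      mul_le_mul_of_nonneg_left (hχle μ hμ) (by exact_mod_cast (le_of_lt ht))
    have e2 : (h μ : EReal) ≤ H := by exact_mod_cast hH μ hμ
    rw [EReal.coe_add, EReal.coe_mul]
    exact add_le_add e2 e1
  have hlim : Tendsto (fun t : ℝ => H / t + β) atTop (𝓝 β) := by
    simpa using (tendsto_const_nhds.div_atTop tendsto_id : Tendsto (fun t : ℝ => H / t) atTop (𝓝 0)).add_const β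
  refine tendsto_of_tendsto_of_tendsto_of_le_of_le' tendsto_const_nhds hlim ?_ ?_
  · filter_upwards [eventually_gt_atTop 0] with t ht
    rw [le_div_iff₀ ht, mul_comm]
    exact hlow t ht
  · filter_upwards [eventually_gt_atTop 0] with t ht
    rw [div_le_iff₀ ht]
    have := hup t ht
    have e : (H / t + β) * t = H + t * β := by field_simp
    rw [e]; exact this
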